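/- Let X and Y be metric spaces satisfying assumptions (A), let Ω ⊊ X be a bounded domain that is locally connected at the boundary, let D ⊊ Y be a bounded domain that is finitely connected at the boundary, and let f ∈ F(Ω, D). If [F_k] is a prime end in D, then the end [f⁻¹(F_k)] represented by the chain {f⁻¹(F_k)} is a singleton prime end in Ω. -/

import Mathlib

open Set Metric Filter Bornology
open scoped ENNReal Topology

noncomputable section

/-- A metric space is doubling if there is `N` such that every ball of radius `r`
can be covered by at most `N` balls of radius `r/2`. -/
def DoublingSpace (X : Type*) [MetricSpace X] : Prop :=
  ∃ N : ℕ, ∀ (x : X) (r : ℝ), ∃ t : Finset X,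
    t.card ≤ N ∧ Metric.ball x r ⊆ ⋃ y ∈ t, Metric.ball y (r / 2)

/-- A metric space is quasiconvex if there is `C ≥ 1` such that any two points are
joined by a rectifiable curve of length at most `C · d(x,y)`. -/
def QuasiconvexSpace (X : Type*) [MetricSpace X] : Prop :=
  ∃ C : ℝ, 1 ≤ C ∧ ∀ x y : X, ∃ γ : ℝ → X,
    ContinuousOn γ (Set.Icc 0 1) ∧ γ 0 = x ∧ γ 1 = y ∧
    eVariationOn γ (Set.Icc 0 1) ≤ ENNReal.ofReal (C * dist x y)

/-- Assumptions (A): complete, doubling and quasiconvex. -/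
def AssumptionsA (X : Type*) [MetricSpace X] : Prop :=
  CompleteSpace X ∧ DoublingSpace X ∧ QuasiconvexSpace X

/-- A domain: a nonempty open connected subset. -/
def IsDomainIn {X : Type*} [MetricSpace X] (Ω : Set X) : Prop :=
  IsOpen Ω ∧ IsConnected Ω

/-- The inner diameter distance `dist_{M'}` between `E, F ⊆ Ω`: the infimum of diameters of
rectifiable curves in `Ω` joining `E` and `F` (the infimum of the empty set being `∞`). -/
def innerDiamDist {X : Type*} [MetricSpace X] (Ω E F : Set X) : ℝ≥0∞ :=
  ⨅ (γ : ℝ → X) (_ : ContinuousOn γ (Set.Icc 0 1) ∧ γ '' Set.Icc 0 1 ⊆ Ω ∧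
      eVariationOn γ (Set.Icc 0 1) < ⊤ ∧ γ 0 ∈ E ∧ γ 1 ∈ F),
    EMetric.diam (γ '' Set.Icc 0 1)

/-- The Mazurkiewicz distance `dist_M` between `A, B ⊆ Ω`: the infimum of diameters of
connected subsets of `Ω` meeting both `A` and `B`. -/
def mazDist {X : Type*} [MetricSpace X] (Ω A B : Set X) : ℝ≥0∞ :=
  ⨅ (K : Set X) (_ : K ⊆ Ω ∧ IsConnected K ∧ (K ∩ A).Nonempty ∧ (K ∩ B).Nonempty),
    EMetric.diam K

/-- An acceptable set in a bounded domain `Ω`: a bounded connected proper subset of `Ω`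
whose closure meets `∂Ω`. -/
def AcceptableIn {X : Type*} [MetricSpace X] (Ω E : Set X) : Prop :=
  Bornology.IsBounded E ∧ IsConnected E ∧ E ⊆ Ω ∧ E ≠ Ω ∧
    (closure E ∩ frontier Ω).Nonempty

/-- A chain in `Ω`. -/
def IsChainIn {X : Type*} [MetricSpace X] (Ω : Set X) (E : ℕ → Set X) : Prop :=
  (∀ k, AcceptableIn Ω (E k)) ∧
  (∀ k, E (k + 1) ⊆ E k) ∧
  (∀ k, 0 < mazDist Ω (Ω ∩ frontier (E (k + 1))) (Ω ∩ frontier (E k))) ∧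
  (⋂ k, closure (E k)) ⊆ frontier Ω

/-- The impression of a chain. -/
def impression {X : Type*} [MetricSpace X] (E : ℕ → Set X) : Set X :=
  ⋂ k, closure (E k)

/-- A chain `E` divides a chain `F` if every member of `F` contains some member of `E`. -/
def ChainDivides {X : Type*} (E F : ℕ → Set X) : Prop :=
  ∀ k, ∃ l, E l ⊆ F k

/-- Two chains are equivalent if they divide each other. -/
def ChainEquiv {X : Type*} (E F : ℕ → Set X) : Prop :=
  ChainDivides E F ∧ ChainDivides F E

/-- A chain represents a prime end if every chain dividing it is equivalent to it. -/
def IsPrimeChain {X : Type*} [MetricSpace X] (Ω : Set X) (E : ℕ → Set X) : Prop :=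
  IsChainIn Ω E ∧ ∀ F : ℕ → Set X, IsChainIn Ω F → ChainDivides F E → ChainDivides E F

/-- A chain represents a singleton prime end if moreover its impression is a single point. -/
def IsSingletonPrimeChain {X : Type*} [MetricSpace X] (Ω : Set X) (E : ℕ → Set X) : Prop :=
  IsPrimeChain Ω E ∧ ∃ x : X, impression E = {x}

/-- The bounded turning condition (linear connectedness): any two distinct points of `Ω` lie in a
continuum contained in `Ω` of diameter at most `L` times their distance. -/
def BoundedTurning {X : Type*} [MetricSpace X] (Ω : Set X) : Prop :=
  ∃ L : ℝ, 1 ≤ L ∧ ∀ x ∈ Ω, ∀ y ∈ Ω, x ≠ y → ∃ K : Set X,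
    K ⊆ Ω ∧ IsCompact K ∧ IsConnected K ∧ K.Nontrivial ∧ x ∈ K ∧ y ∈ K ∧
    Metric.diam K ≤ L * dist x y

/-- `Ω` is finitely connected at a boundary point `x`. -/
def FinitelyConnectedAt {X : Type*} [MetricSpace X] (Ω : Set X) (x : X) : Prop :=
  ∀ r : ℝ, 0 < r → ∃ U : Set X, IsOpen U ∧ Bornology.IsBounded U ∧ x ∈ U ∧
    U ⊆ Metric.ball x r ∧
    {C : Set X | ∃ y ∈ U ∩ Ω, C = connectedComponentIn (U ∩ Ω) y}.Finite

/-- `Ω` is finitely connected at the boundary. -/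
def FinitelyConnectedAtBoundary {X : Type*} [MetricSpace X] (Ω : Set X) : Prop :=
  ∀ x ∈ frontier Ω, FinitelyConnectedAt Ω x

/-- `Ω` is locally connected at a boundary point `x`. -/
def LocallyConnectedAt {X : Type*} [MetricSpace X] (Ω : Set X) (x : X) : Prop :=
  ∀ r : ℝ, 0 < r → ∃ U : Set X, IsOpen U ∧ Bornology.IsBounded U ∧ x ∈ U ∧
    U ⊆ Metric.ball x r ∧ IsConnected (U ∩ Ω)

/-- `Ω` is locally connected at the boundary. -/
def LocallyConnectedAtBoundary {X : Type*} [MetricSpace X] (Ω : Set X) : Prop :=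
  ∀ x ∈ frontier Ω, LocallyConnectedAt Ω x

/-- `f` is a homeomorphism of `Ω` onto `Ω'` with inverse `g`. -/
def IsHomeoBetween {X Y : Type*} [MetricSpace X] [MetricSpace Y] (f : X → Y) (g : Y → X)
    (Ω : Set X) (Ω' : Set Y) : Prop :=
  ContinuousOn f Ω ∧ ContinuousOn g Ω' ∧ Set.MapsTo f Ω Ω' ∧ Set.MapsTo g Ω' Ω ∧
  (∀ x ∈ Ω, g (f x) = x) ∧ (∀ y ∈ Ω', f (g y) = y)

/-- The class `F(Ω, Ω')`: homeomorphisms such that for all connected `E, F ⊊ Ω`,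
`dist_{M'}(E,F) = 0` iff `dist_{M'}(f(E), f(F)) = 0`. -/
def ClassF {X Y : Type*} [MetricSpace X] [MetricSpace Y] (Ω : Set X) (Ω' : Set Y)
    (f : X → Y) (g : Y → X) : Prop :=
  IsHomeoBetween f g Ω Ω' ∧
  ∀ E F : Set X, E ⊆ Ω → E ≠ Ω → IsConnected E → F ⊆ Ω → F ≠ Ω → IsConnected F →
    (innerDiamDist Ω E F = 0 ↔ innerDiamDist Ω' (f '' E) (f '' F) = 0)

/-- The cluster set `C(f, x)` of `f : Ω → Y` at `x`. -/
def clusterSetOn {X Y : Type*} [MetricSpace X] [MetricSpace Y] (f : X → Y) (Ω : Set X)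
    (x : X) : Set Y :=
  ⋂ U ∈ 𝓝 x, closure (f '' (U ∩ Ω))

/-!
On an open subset of a quasiconvex space the distances `dist_{M'}` and `dist_M` agree, so
`f ∈ F(Ω, D)` says that `f` and `f⁻¹` preserve the vanishing of `dist_M` between connected proper
subsets. Under (A) the domains moreover have compact closures.

Local connectedness of `Ω` at the boundary makes `dist_M` vanish between any two subsets of `Ω`
that accumulate at a common boundary point. Hence `closure E_{k+1}` and `closure (Ω \ E_k)` are
disjoint for every chain `{E_k}` in `Ω`, so the connected neighbourhoods of a point `x` of the
impression form a chain dividing `{E_k}`, and a prime end has impression `{x}`.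

It remains that `f` and `f⁻¹` map chains to chains. For `f` this is a compactness argument: distinct
points of `closure Ω` have neighbourhoods whose images are at positive Mazurkiewicz distance. For
`f⁻¹`, suppose `f⁻¹(F_{k+1})` and `f⁻¹(D \ F_k)` accumulate at a common `x ∈ ∂Ω`. Finite
connectedness of `D` yields arbitrarily small connected `C ⊆ D` such that `f⁻¹(C \ F_k)` still
accumulates at `x`. Then `dist_M(f⁻¹(C), f⁻¹(F_{k+1})) = 0`, so `dist_M(C, F_{k+1}) = 0`, and a
small connected set joins `F_{k+1}` to `D \ F_k`, contradicting the separation condition on chains.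
-/

section DoublingSpace

variable {X : Type*} [MetricSpace X]

lemma DoublingSpace.exists_finite_cover_ball (h : DoublingSpace X) (x : X) (r : ℝ) (n : ℕ) :
    ∃ t : Set X, t.Finite ∧ ball x r ⊆ ⋃ y ∈ t, ball y (r / 2 ^ n) := by
  obtain ⟨N, hN⟩ := h
  induction n with
  | zero => exact ⟨{x}, finite_singleton x, by simp⟩
  | succ n ih =>
    obtain ⟨t, ht, hcover⟩ := ih
    choose s _ hs using fun y => hN y (r / 2 ^ n)
    refine ⟨⋃ y ∈ t, (s y : Set X), ht.biUnion fun y _ => (s y).finite_toSet, fun z hz => ?_⟩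
    obtain ⟨y, hy, hzy⟩ := mem_iUnion₂.1 (hcover hz)
    obtain ⟨w, hw, hzw⟩ := mem_iUnion₂.1 (hs y hzy)
    rw [div_div, ← pow_succ] at hzw
    exact mem_iUnion₂.2 ⟨w, mem_iUnion₂.2 ⟨y, hy, hw⟩, hzw⟩

lemma DoublingSpace.totallyBounded (h : DoublingSpace X) {s : Set X} (hs : IsBounded s) :
    TotallyBounded s := by
  rcases s.eq_empty_or_nonempty with rfl | ⟨x, -⟩
  · exact totallyBounded_empty
  obtain ⟨r, hr⟩ := hs.subset_ball x
  refine TotallyBounded.subset hr (Metric.totallyBounded_iff.2 fun ε hε => ?_)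
  have hlim : Tendsto (fun n : ℕ => r / 2 ^ n) atTop (𝓝 0) :=
    tendsto_const_nhds.div_atTop (tendsto_pow_atTop_atTop_of_one_lt one_lt_two)
  obtain ⟨n, hn⟩ := (hlim.eventually_lt_const hε).exists
  obtain ⟨t, ht, hcover⟩ := h.exists_finite_cover_ball x r n
  exact ⟨t, ht, hcover.trans (iUnion₂_mono fun y _ => ball_subset_ball hn.le)⟩

lemma AssumptionsA.isCompact_closure (h : AssumptionsA X) {s : Set X} (hs : IsBounded s) :
    IsCompact (closure s) := by
  have := h.1
  exact (h.2.1.totallyBounded hs).closure.isCompact_of_isComplete isClosed_closure.isComplete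

end DoublingSpace

lemma two_mul_coe_half (ε : NNReal) : 2 * ((ε / 2 : NNReal) : ℝ≥0∞) = ε := by
  rw [← ENNReal.coe_ofNat, ← ENNReal.coe_mul, mul_div_cancel₀ _ two_ne_zero]

section mazDist

variable {X : Type*} [MetricSpace X] {Ω A B K : Set X}

lemma mazDist_le_ediam (hKΩ : K ⊆ Ω) (hK : IsConnected K) (hKA : (K ∩ A).Nonempty)
    (hKB : (K ∩ B).Nonempty) : mazDist Ω A B ≤ ediam K :=
  iInf₂_le K ⟨hKΩ, hK, hKA, hKB⟩

lemma exists_isConnected_ediam_lt {ε : ℝ≥0∞} (h : mazDist Ω A B < ε) :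
    ∃ K ⊆ Ω, IsConnected K ∧ (K ∩ A).Nonempty ∧ (K ∩ B).Nonempty ∧ ediam K < ε := by
  obtain ⟨K, hK⟩ := iInf_lt_iff.1 h
  obtain ⟨⟨hKΩ, hKc, hKA, hKB⟩, hKε⟩ := iInf_lt_iff.1 hK
  exact ⟨K, hKΩ, hKc, hKA, hKB, hKε⟩

lemma mazDist_comm (Ω A B : Set X) : mazDist Ω A B = mazDist Ω B A := by
  unfold mazDist
  congr! 4
  rw [and_comm (a := (_ ∩ A).Nonempty)]

lemma mazDist_mono {A' B' : Set X} (hA : A ⊆ A') (hB : B ⊆ B') :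
    mazDist Ω A' B' ≤ mazDist Ω A B := by
  refine le_iInf₂ fun K ⟨hKΩ, hK, hKA, hKB⟩ => ?_
  exact mazDist_le_ediam hKΩ hK (hKA.mono (by gcongr)) (hKB.mono (by gcongr))

lemma mazDist_empty_right (Ω A : Set X) : mazDist Ω A ∅ = ⊤ := by
  simp [mazDist]

lemma mazDist_union_right (Ω A B B' : Set X) :
    mazDist Ω A (B ∪ B') = min (mazDist Ω A B) (mazDist Ω A B') := by
  refine le_antisymm
    (le_min (mazDist_mono le_rfl subset_union_left) (mazDist_mono le_rfl subset_union_right))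
    (le_iInf₂ fun K ⟨hKΩ, hK, hKA, hKB⟩ => ?_)
  rw [inter_union_distrib_left, union_nonempty] at hKB
  rcases hKB with hKB | hKB
  · exact min_le_of_left_le (mazDist_le_ediam hKΩ hK hKA hKB)
  · exact min_le_of_right_le (mazDist_le_ediam hKΩ hK hKA hKB)

lemma mazDist_le_add_ediam {C : Set X} (hCΩ : C ⊆ Ω) (hC : IsConnected C)
    (hCB : (C ∩ B).Nonempty) : mazDist Ω A B ≤ mazDist Ω A C + ediam C := by
  refine ENNReal.le_of_forall_pos_le_add fun ε hε hfin => ?_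
  obtain ⟨K, hKΩ, hK, hKA, hKC, hKε⟩ := exists_isConnected_ediam_lt
    (ENNReal.lt_add_right (ENNReal.add_lt_top.1 hfin).1.ne (ENNReal.coe_ne_zero.2 hε.ne'))
  calc mazDist Ω A B ≤ ediam (K ∪ C) :=
        mazDist_le_ediam (union_subset hKΩ hCΩ) (hK.union hKC hC)
          (hKA.mono (by gcongr; exact subset_union_left))
          (hCB.mono (by gcongr; exact subset_union_right))
    _ ≤ ediam K + ediam C := ediam_union_le hKC
    _ ≤ mazDist Ω A C + ε + ediam C := by gcongr
    _ = mazDist Ω A C + ediam C + ε := add_right_comm ..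

lemma le_mazDist_of_forall_le_edist {r : ℝ≥0∞} (h : ∀ a ∈ A, ∀ b ∈ B, r ≤ edist a b) :
    r ≤ mazDist Ω A B := by
  refine le_iInf₂ fun K ⟨_, _, ⟨a, haK, haA⟩, ⟨b, hbK, hbB⟩⟩ => ?_
  exact (h a haA b hbB).trans (edist_le_ediam_of_mem haK hbK)

lemma mazDist_pos_of_disjoint_closure (hA : IsCompact (closure A))
    (h : Disjoint (closure A) (closure B)) : 0 < mazDist Ω A B := by
  obtain ⟨r, hr, hlt⟩ := exists_pos_forall_lt_edist hA isClosed_closure h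
  exact (ENNReal.coe_pos.2 hr).trans_le <| le_mazDist_of_forall_le_edist fun a ha b hb =>
    (hlt a (subset_closure ha) b (subset_closure hb)).le

lemma mazDist_eq_zero_of_mem {x : X} (hxΩ : x ∈ Ω) (hxA : x ∈ A) (hxB : x ∈ B) :
    mazDist Ω A B = 0 :=
  le_zero_iff.1 <| ediam_singleton (x := x) ▸ mazDist_le_ediam (singleton_subset_iff.2 hxΩ)
    isConnected_singleton ⟨x, rfl, hxA⟩ ⟨x, rfl, hxB⟩

lemma ediam_le_of_subset_ball {U : Set X} {x : X} {r : NNReal} (h : U ⊆ ball x r) :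
    ediam U ≤ 2 * r :=
  (ediam_mono (h.trans_eq eball_coe.symm)).trans ediam_eball_le

lemma LocallyConnectedAt.mazDist_eq_zero {x : X} (h : LocallyConnectedAt Ω x) (hAΩ : A ⊆ Ω)
    (hBΩ : B ⊆ Ω) (hxA : x ∈ closure A) (hxB : x ∈ closure B) : mazDist Ω A B = 0 := by
  refine le_zero_iff.1 (ENNReal.le_of_forall_pos_le_add fun ε hε _ => ?_)
  obtain ⟨U, hUo, -, hxU, hUball, hUc⟩ := h (ε / 2 : NNReal) (by positivity)
  obtain ⟨a, haU, haA⟩ := mem_closure_iff.1 hxA U hUo hxU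
  obtain ⟨b, hbU, hbB⟩ := mem_closure_iff.1 hxB U hUo hxU
  calc mazDist Ω A B ≤ ediam (U ∩ Ω) :=
        mazDist_le_ediam inter_subset_right hUc ⟨a, ⟨haU, hAΩ haA⟩, haA⟩ ⟨b, ⟨hbU, hBΩ hbB⟩, hbB⟩
    _ ≤ 2 * (ε / 2 : NNReal) := ediam_le_of_subset_ball (inter_subset_left.trans hUball)
    _ = 0 + ε := by rw [zero_add, two_mul_coe_half]

lemma inter_frontier_nonempty_of_isPreconnected {S : Set X} (hK : IsPreconnected K)
    (hS : (K ∩ S).Nonempty) (hS' : (K \ S).Nonempty) : (K ∩ frontier S).Nonempty := by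
  have := isPreconnected_iff_preconnectedSpace.1 hK
  obtain ⟨x, hxK, hxS⟩ := hS
  obtain ⟨y, hyK, hyS⟩ := hS'
  have hne : (Subtype.val ⁻¹' S : Set K) ≠ univ :=
    (ne_univ_iff_exists_notMem _).2 ⟨⟨y, hyK⟩, hyS⟩
  obtain ⟨z, hz⟩ := nonempty_frontier_iff.2 ⟨⟨⟨x, hxK⟩, hxS⟩, hne⟩
  exact ⟨z, z.2, continuous_subtype_val.frontier_preimage_subset S hz⟩

lemma mazDist_frontier_le {S T : Set X} (hST : S ⊆ T) :
    mazDist Ω (Ω ∩ frontier S) (Ω ∩ frontier T) ≤ mazDist Ω S (Ω \ T) := by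
  refine le_iInf₂ fun K ⟨hKΩ, hK, hKS, hKT⟩ => ?_
  have hKT' : (K \ T).Nonempty := hKT.mono fun x hx => ⟨hx.1, hx.2.2⟩
  have hmeets {R : Set X} (hSR : S ⊆ R) (hRT : R ⊆ T) : (K ∩ (Ω ∩ frontier R)).Nonempty := by
    rw [← inter_assoc, inter_eq_left.2 hKΩ]
    exact inter_frontier_nonempty_of_isPreconnected hK.isPreconnected
      (hKS.mono (by gcongr)) (hKT'.mono (by gcongr))
  exact mazDist_le_ediam hKΩ hK (hmeets le_rfl hST) (hmeets hST le_rfl)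

lemma notMem_closure_sdiff_of_mazDist_frontier_pos {S T : Set X} (hST : S ⊆ T)
    (h : 0 < mazDist Ω (Ω ∩ frontier S) (Ω ∩ frontier T)) {x : X} (hxΩ : x ∈ Ω)
    (hxS : x ∈ closure S) : x ∉ closure (Ω \ T) := by
  intro hxT
  have hx : x ∉ interior T := by
    rw [← mem_compl_iff, ← closure_compl]
    exact closure_mono (sdiff_subset_compl Ω T) hxT
  exact h.ne' <| mazDist_eq_zero_of_mem hxΩ ⟨hxΩ, hxS, fun h => hx (interior_mono hST h)⟩
    ⟨hxΩ, closure_mono hST hxS, hx⟩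

lemma closure_inter_frontier_subset {T : Set X} (hΩ : IsOpen Ω) :
    closure (Ω ∩ frontier T) ⊆ closure (Ω \ T) := by
  rw [frontier_eq_closure_inter_closure, sdiff_eq]
  exact closure_minimal ((inter_subset_inter_right _ inter_subset_right).trans
    hΩ.inter_closure) isClosed_closure

lemma mazDist_frontier_pos {S T : Set X} (hΩ : IsOpen Ω) (hS : IsCompact (closure S))
    (h : Disjoint (closure S) (closure (Ω \ T))) :
    0 < mazDist Ω (Ω ∩ frontier S) (Ω ∩ frontier T) := by
  have hsub : closure (Ω ∩ frontier S) ⊆ closure S :=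
    closure_minimal (inter_subset_right.trans frontier_subset_closure) isClosed_closure
  exact mazDist_pos_of_disjoint_closure (hS.of_isClosed_subset isClosed_closure hsub)
    (h.mono hsub (closure_inter_frontier_subset hΩ))

end mazDist

section LocallyConnectedAtBoundary

variable {X : Type*} [MetricSpace X] {Ω : Set X} {E F : ℕ → Set X} {x : X}

lemma AcceptableIn.ssubset {S : Set X} (hS : AcceptableIn Ω S) : S ⊂ Ω :=
  hS.2.2.1.ssubset_of_ne hS.2.2.2.1

lemma IsChainIn.ssubset (hE : IsChainIn Ω E) (k : ℕ) : E k ⊂ Ω :=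
  (hE.1 k).ssubset

lemma IsChainIn.isConnected (hE : IsChainIn Ω E) (k : ℕ) : IsConnected (E k) :=
  (hE.1 k).2.1

lemma IsChainIn.succ_subset (hE : IsChainIn Ω E) (k : ℕ) : E (k + 1) ⊆ E k :=
  hE.2.1 k

lemma IsChainIn.mazDist_frontier_pos (hE : IsChainIn Ω E) (k : ℕ) :
    0 < mazDist Ω (Ω ∩ frontier (E (k + 1))) (Ω ∩ frontier (E k)) :=
  hE.2.2.1 k

lemma IsChainIn.impression_subset_frontier (hE : IsChainIn Ω E) : impression E ⊆ frontier Ω :=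
  hE.2.2.2

lemma ChainDivides.impression_subset (h : ChainDivides E F) : impression E ⊆ impression F :=
  subset_iInter fun k => (h k).elim fun l hl => (iInter_subset _ l).trans (closure_mono hl)

lemma IsChainIn.nonempty_impression (hE : IsChainIn Ω E) (hΩ : IsCompact (closure Ω)) :
    (impression E).Nonempty :=
  IsCompact.nonempty_iInter_of_sequence_nonempty_isCompact_isClosed _
    (fun k => closure_mono (hE.succ_subset k)) (fun k => (hE.isConnected k).nonempty.closure)
    (hΩ.of_isClosed_subset isClosed_closure (closure_mono (hE.ssubset 0).subset))
    fun _ => isClosed_closure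

lemma IsChainIn.disjoint_closure (hE : IsChainIn Ω E) (hΩ : LocallyConnectedAtBoundary Ω)
    (k : ℕ) : Disjoint (closure (E (k + 1))) (closure (Ω \ E k)) := by
  refine disjoint_left.2 fun x hxE hxΩ => ?_
  by_cases hx : x ∈ Ω
  · exact notMem_closure_sdiff_of_mazDist_frontier_pos (hE.succ_subset k)
      (hE.mazDist_frontier_pos k) hx hxE hxΩ
  have hxfr : x ∈ frontier Ω :=
    ⟨closure_mono sdiff_subset hxΩ, fun h => hx (interior_subset h)⟩
  exact ((hE.mazDist_frontier_pos k).trans_le (mazDist_frontier_le (hE.succ_subset k))).ne'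
    ((hΩ x hxfr).mazDist_eq_zero (hE.ssubset (k + 1)).subset sdiff_subset hxE hxΩ)

lemma LocallyConnectedAt.hasBasis_nhds (h : LocallyConnectedAt Ω x) :
    (𝓝 x).HasBasis (fun U => IsOpen U ∧ x ∈ U ∧ IsConnected (U ∩ Ω)) id := by
  refine ⟨fun V => ⟨fun hV => ?_, fun ⟨U, ⟨hUo, hxU, _⟩, hUV⟩ =>
    mem_of_superset (hUo.mem_nhds hxU) hUV⟩⟩
  obtain ⟨r, hr, hrV⟩ := Metric.mem_nhds_iff.1 hV
  obtain ⟨U, hUo, -, hxU, hUr, hUc⟩ := h r hr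
  exact ⟨U, ⟨hUo, hxU, hUc⟩, hUr.trans hrV⟩

lemma LocallyConnectedAt.exists_hasAntitoneBasis (h : LocallyConnectedAt Ω x) {V : Set X}
    (hV : V ∈ 𝓝 x) : ∃ U : ℕ → Set X, (𝓝 x).HasAntitoneBasis U ∧
      (∀ n, IsOpen (U n) ∧ x ∈ U n ∧ IsConnected (U n ∩ Ω) ∧ U n ⊆ V) ∧
      ∀ n, closure (U (n + 1)) ⊆ U n := by
  obtain ⟨U, hU, hbasis⟩ := (h.hasBasis_nhds.restrict_subset hV).exists_antitone_subbasis
  have hclosure (m : ℕ) : ∀ᶠ n in atTop, closure (U n) ⊆ U m := by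
    obtain ⟨N, -, hN⟩ := hbasis.toHasBasis.nhds_closure.mem_iff.1 (hbasis.mem m)
    filter_upwards [eventually_ge_atTop N] with n hn
    exact (closure_mono (hbasis.antitone hn)).trans hN
  obtain ⟨φ, -, hφ, hbasisφ⟩ := hbasis.subbasis_with_rel hclosure
  exact ⟨fun n => U (φ n), hbasisφ,
    fun n => ⟨(hU _).1.1, (hU _).1.2.1, (hU _).1.2.2, (hU _).2⟩, fun n => hφ n.lt_succ_self⟩

lemma LocallyConnectedAt.exists_isChainIn (h : LocallyConnectedAt Ω x) (hΩ : IsOpen Ω)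
    (hΩc : IsCompact (closure Ω)) (hx : x ∈ frontier Ω) :
    ∃ E, IsChainIn Ω E ∧ impression E = {x} ∧ ∀ V ∈ 𝓝 x, ∃ l, E l ⊆ V := by
  obtain ⟨p, hp⟩ := closure_nonempty_iff.1 ⟨x, hx.1⟩
  have hxp : x ≠ p := (disjoint_frontier_iff_isOpen.2 hΩ).ne_of_mem hx hp
  obtain ⟨U, hbasis, hU, hclosure⟩ :=
    h.exists_hasAntitoneBasis (isOpen_compl_singleton.mem_nhds hxp)
  have hanti (n : ℕ) : U (n + 1) ∩ Ω ⊆ U n ∩ Ω :=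
    inter_subset_inter_left Ω (hbasis.antitone n.le_succ)
  have hxmem (n : ℕ) : x ∈ closure (U n ∩ Ω) :=
    (hU n).1.inter_closure ⟨(hU n).2.1, hx.1⟩
  have himpression : impression (fun n => U n ∩ Ω) = {x} := by
    refine Subset.antisymm ?_ (singleton_subset_iff.2 (mem_iInter.2 hxmem))
    rw [← biInter_basis_nhds hbasis.toHasBasis.nhds_closure]
    exact iInter_mono fun n => subset_iInter fun _ => closure_mono inter_subset_left
  refine ⟨fun n => U n ∩ Ω, ⟨fun n => ⟨?_, (hU n).2.2.1, inter_subset_right, ?_, x, hxmem n, hx⟩,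
    hanti, fun n => ?_, ?_⟩, himpression, fun V hV => ?_⟩
  · exact hΩc.isBounded.subset (inter_subset_right.trans subset_closure)
  · exact fun heq => (hU n).2.2.2 (heq.symm.subset hp).1 rfl
  · refine mazDist_frontier_pos hΩ
      (hΩc.of_isClosed_subset isClosed_closure (closure_mono inter_subset_right)) ?_
    refine Disjoint.mono ((closure_mono inter_subset_left).trans (hclosure n)) ?_
      disjoint_compl_right
    exact closure_minimal (fun z hz hzU => hz.2 ⟨hzU, hz.1⟩) (hU n).1.isClosed_compl
  · exact himpression.subset.trans (singleton_subset_iff.2 hx)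
  · obtain ⟨l, hl⟩ := hbasis.mem_iff.1 hV
    exact ⟨l, inter_subset_left.trans hl⟩

lemma IsPrimeChain.isSingletonPrimeChain (hE : IsPrimeChain Ω E) (hΩ : IsOpen Ω)
    (hΩc : IsCompact (closure Ω)) (hlc : LocallyConnectedAtBoundary Ω) :
    IsSingletonPrimeChain Ω E := by
  obtain ⟨hchain, hprime⟩ := hE
  obtain ⟨x, hx⟩ := hchain.nonempty_impression hΩc
  have hxfr : x ∈ frontier Ω := hchain.impression_subset_frontier hx
  obtain ⟨N, hN, hNx, hNsmall⟩ := (hlc x hxfr).exists_isChainIn hΩ hΩc hxfr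
  have hdivides : ChainDivides N E := fun k => by
    have hxk : x ∉ closure (Ω \ E k) :=
      disjoint_left.1 (hchain.disjoint_closure hlc k) (mem_iInter.1 hx (k + 1))
    obtain ⟨l, hl⟩ := hNsmall _ (isClosed_closure.isOpen_compl.mem_nhds hxk)
    exact ⟨l, fun z hz => by_contra fun hzE =>
      hl hz (subset_closure ⟨(hN.ssubset l).subset hz, hzE⟩)⟩
  refine ⟨⟨hchain, hprime⟩, x, Subset.antisymm ?_ (singleton_subset_iff.2 hx)⟩
  exact hNx ▸ (hprime N hN hdivides).impression_subset

end LocallyConnectedAtBoundary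

section Cluster

variable {X Y : Type*} [MetricSpace X] [MetricSpace Y]

lemma exists_mem_clusterSetOn {f : X → Y} {A : Set X} {y : Y} (hA : IsCompact (closure A))
    (hy : y ∈ closure (f '' A)) : ∃ x ∈ closure A, y ∈ clusterSetOn f A x := by
  have : (𝓟 A ⊓ comap f (𝓝 y)).NeBot := by
    rw [neBot_inf_comap_iff_map, map_principal, inf_comm]
    exact mem_closure_iff_clusterPt.1 hy
  obtain ⟨x, hxA, hx⟩ := hA (inf_le_left.trans (principal_mono.2 subset_closure) :
    𝓟 A ⊓ comap f (𝓝 y) ≤ 𝓟 (closure A))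
  refine ⟨x, hxA, mem_iInter₂.2 fun U hU => mem_closure_iff_nhds.2 fun V hV => ?_⟩
  obtain ⟨z, hzU, hzA, hzV⟩ := clusterPt_iff_nonempty.1 hx hU
    (inter_mem_inf (mem_principal_self A) (preimage_mem_comap hV))
  exact ⟨f z, hzV, mem_image_of_mem f ⟨hzU, hzA⟩⟩

lemma clusterSetOn_subset_singleton {f : X → Y} {x : X} (hf : ContinuousAt f x) (A : Set X) :
    clusterSetOn f A x ⊆ {f x} := by
  rw [← biInter_basis_nhds (hasBasis_nhds_closure (f x))]
  exact fun y hy => mem_iInter₂.2 fun V hV =>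
    closure_mono (image_subset_iff.2 inter_subset_left) (mem_iInter₂.1 hy _ (hf hV))

lemma FinitelyConnectedAt.exists_isConnected_mem_closure_image {f : X → Y} {Ω A : Set X} {x : X}
    {y : Y} (h : FinitelyConnectedAt Ω x) (hA : A ⊆ Ω) (hy : y ∈ clusterSetOn f A x) {r : ℝ}
    (hr : 0 < r) : ∃ C ⊆ Ω, IsConnected C ∧ C ⊆ ball x r ∧ y ∈ closure (f '' (C ∩ A)) := by
  obtain ⟨U, hUo, -, hxU, hUr, hfin⟩ := h r hr
  have hcover : f '' (U ∩ A) ⊆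
      ⋃ C ∈ {C | ∃ z ∈ U ∩ Ω, C = connectedComponentIn (U ∩ Ω) z}, f '' (C ∩ A) := by
    rintro - ⟨z, ⟨hzU, hzA⟩, rfl⟩
    have hz : z ∈ U ∩ Ω := ⟨hzU, hA hzA⟩
    exact mem_biUnion ⟨z, hz, rfl⟩ (mem_image_of_mem f ⟨mem_connectedComponentIn hz, hzA⟩)
  have hyU := closure_mono hcover (mem_iInter₂.1 hy U (hUo.mem_nhds hxU))
  rw [hfin.closure_biUnion] at hyU
  obtain ⟨-, ⟨z, hz, rfl⟩, hyC⟩ := mem_iUnion₂.1 hyU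
  have hCU : connectedComponentIn (U ∩ Ω) z ⊆ U ∩ Ω := connectedComponentIn_subset _ _
  exact ⟨_, hCU.trans inter_subset_right, isConnected_connectedComponentIn_iff.2 hz,
    hCU.trans (inter_subset_left.trans hUr), hyC⟩

end Cluster

section Transport

variable {X Y : Type*} [MetricSpace X] [MetricSpace Y] {e : OpenPartialHomeomorph X Y}
  {S T : Set X}

lemma isImage_image (hS : S ⊆ e.source) : e.IsImage S (e '' S) := by
  refine .of_image_eq ?_
  rw [inter_eq_right.2 hS, inter_eq_right.2 (e.mapsTo.image_subset.trans' (image_mono hS))]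

lemma image_sdiff_of_subset_source (hS : S ⊆ e.source) :
    e '' (e.source \ S) = e.target \ e '' S :=
  (isImage_image hS).compl.image_eq

lemma image_ssubset_target (hS : S ⊂ e.source) : e '' S ⊂ e.target := by
  rw [← e.image_source_eq_target]
  exact (e.injOn.image_ssubset_image_iff hS.subset le_rfl).2 hS

lemma exists_mem_frontier_mem_clusterSetOn (hX : IsCompact (closure e.source))
    (hS : S ⊆ e.source) {y : Y} (hyS : y ∈ closure (e '' S)) (hy : y ∈ frontier e.target) :
    ∃ x ∈ closure S ∩ frontier e.source, y ∈ clusterSetOn e S x := by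
  obtain ⟨x, hxS, hxy⟩ := exists_mem_clusterSetOn
    (hX.of_isClosed_subset isClosed_closure (closure_mono hS)) hyS
  refine ⟨x, ⟨hxS, ?_⟩, hxy⟩
  rw [e.open_source.frontier_eq]
  refine ⟨closure_mono hS hxS, fun hx => ?_⟩
  rw [clusterSetOn_subset_singleton (e.continuousAt hx) _ hxy] at hy
  exact (disjoint_frontier_iff_isOpen.2 e.open_target).ne_of_mem hy (e.map_source hx) rfl

lemma AcceptableIn.image (hS : AcceptableIn e.source S) (hY : IsCompact (closure e.target)) :
    AcceptableIn e.target (e '' S) := by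
  have himage := image_ssubset_target hS.ssubset
  obtain ⟨-, hSc, hSsub, -, x, hxS, hx⟩ := hS
  rw [← e.symm_image_image_of_subset_source hSsub] at hxS
  obtain ⟨y, hy, -⟩ := exists_mem_frontier_mem_clusterSetOn (e := e.symm) hY himage.subset hxS hx
  exact ⟨hY.isBounded.subset (himage.subset.trans subset_closure),
    hSc.image e (e.continuousOn.mono hSsub), himage.subset, himage.ne, y, hy⟩

lemma IsChainIn.impression_image_subset_frontier {E : ℕ → Set X} (hE : IsChainIn e.source E) :
    impression (fun k => e '' E k) ⊆ frontier e.target := by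
  intro y hy
  rw [e.open_target.frontier_eq]
  refine ⟨closure_mono (e.mapsTo.image_subset.trans' (image_mono (hE.ssubset 0).subset))
    (mem_iInter.1 hy 0), fun hyD => ?_⟩
  have hx : e.symm y ∈ impression E := mem_iInter.2 fun k =>
    ((isImage_image (hE.ssubset k).subset).closure.symm_apply_mem_iff hyD).2 (mem_iInter.1 hy k)
  exact (disjoint_frontier_iff_isOpen.2 e.open_source).ne_of_mem (hE.impression_subset_frontier hx)
    (e.map_target hyD) rfl

lemma IsChainIn.image {E : ℕ → Set X} (hE : IsChainIn e.source E)
    (hY : IsCompact (closure e.target))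
    (hpos : ∀ k, 0 < mazDist e.target (e.target ∩ frontier (e '' E (k + 1)))
      (e.target ∩ frontier (e '' E k))) : IsChainIn e.target (fun k => e '' E k) :=
  ⟨fun k => (hE.1 k).image hY, fun k => image_mono (hE.succ_subset k), hpos,
    hE.impression_image_subset_frontier⟩

end Transport

section PreservesMazDistZero

variable {X Y : Type*} [MetricSpace X] [MetricSpace Y] {e : OpenPartialHomeomorph X Y}
  {A B S T : Set X}

/-- A partial homeomorphism preserves vanishing of the Mazurkiewicz distance if, for connected
proper subsets `E, F` of its source, `dist_M(E, F) = 0` iff `dist_M(e(E), e(F)) = 0`. On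
quasiconvex spaces this is the condition defining the class `F(Ω, Ω')`. -/
def PreservesMazDistZero (e : OpenPartialHomeomorph X Y) : Prop :=
  ∀ ⦃E F : Set X⦄, E ⊂ e.source → IsConnected E → F ⊂ e.source → IsConnected F →
    (mazDist e.source E F = 0 ↔ mazDist e.target (e '' E) (e '' F) = 0)

lemma PreservesMazDistZero.symm (he : PreservesMazDistZero e) : PreservesMazDistZero e.symm := by
  intro E F hE hEc hF hFc
  have hEF := he (image_ssubset_target hE) (hEc.image _ (e.symm.continuousOn.mono hE.subset))
    (image_ssubset_target hF) (hFc.image _ (e.symm.continuousOn.mono hF.subset))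
  have hEe : e '' (e.symm '' E) = E := e.image_symm_image_of_subset_target hE.subset
  have hFe : e '' (e.symm '' F) = F := e.image_symm_image_of_subset_target hF.subset
  rw [hEe, hFe] at hEF
  exact hEF.symm

lemma exists_nhds_mazDist_image_pos_of_mem_source {x y : X} (hx : x ∈ e.source) (hxy : x ≠ y) :
    ∃ U ∈ 𝓝 x, ∃ V ∈ 𝓝 y,
      0 < mazDist e.target (e '' (U ∩ e.source)) (e '' (V ∩ e.source)) := by
  obtain ⟨U, V, hU, hV, hUV⟩ := t2_separation_nhds hxy
  obtain ⟨r, hr, hrU⟩ := EMetric.mem_nhds_iff.1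
    (e.image_mem_nhds hx (inter_mem hU (e.open_source.mem_nhds hx)))
  refine ⟨e ⁻¹' eball (e x) (r / 2),
    e.continuousAt hx (eball_mem_nhds _ (ENNReal.half_pos hr.ne')), V, hV, ?_⟩
  refine (ENNReal.half_pos hr.ne').trans_le (le_mazDist_of_forall_le_edist ?_)
  rintro - ⟨a, ⟨ha, -⟩, rfl⟩ - ⟨b, ⟨hbV, hb⟩, rfl⟩
  by_contra! hab
  have hbr : edist (e b) (e x) < r := by
    calc edist (e b) (e x) ≤ edist (e b) (e a) + edist (e a) (e x) := edist_triangle ..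
      _ < r / 2 + r / 2 := ENNReal.add_lt_add (edist_comm (e a) (e b) ▸ hab) ha
      _ = r := ENNReal.add_halves r
  obtain ⟨c, ⟨hcU, hc⟩, hcb⟩ := hrU hbr
  exact hUV.ne_of_mem hcU hbV (e.injOn hc hb hcb)

lemma exists_nhds_mazDist_image_pos_of_locallyConnectedAt (he : PreservesMazDistZero e)
    (hX : IsCompact (closure e.source)) {x y : X} (hx : LocallyConnectedAt e.source x)
    (hy : LocallyConnectedAt e.source y) (hxy : x ≠ y) :
    ∃ U ∈ 𝓝 x, ∃ V ∈ 𝓝 y,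
      0 < mazDist e.target (e '' (U ∩ e.source)) (e '' (V ∩ e.source)) := by
  obtain ⟨U', hU', V', hV', hUV'⟩ := exists_nhds_disjoint_closure hxy
  obtain ⟨U, ⟨hUo, hxU, hUc⟩, hUU'⟩ := hx.hasBasis_nhds.mem_iff.1 hU'
  obtain ⟨V, ⟨hVo, hyV, hVc⟩, hVV'⟩ := hy.hasBasis_nhds.mem_iff.1 hV'
  have hdisj : Disjoint (closure (U ∩ e.source)) (closure (V ∩ e.source)) :=
    hUV'.mono (closure_mono (inter_subset_left.trans hUU'))
      (closure_mono (inter_subset_left.trans hVV'))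
  have hproper : Disjoint (U ∩ e.source) (V ∩ e.source) :=
    hdisj.mono subset_closure subset_closure
  have hU : U ∩ e.source ⊂ e.source := inter_subset_right.ssubset_of_ne fun h =>
    hVc.nonempty.ne_empty (hproper.eq_bot_of_ge (h.symm ▸ inter_subset_right))
  have hV : V ∩ e.source ⊂ e.source := inter_subset_right.ssubset_of_ne fun h =>
    hUc.nonempty.ne_empty (hproper.symm.eq_bot_of_ge (h.symm ▸ inter_subset_right))
  refine ⟨U, hUo.mem_nhds hxU, V, hVo.mem_nhds hyV, pos_iff_ne_zero.2 fun h => ?_⟩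
  exact (mazDist_pos_of_disjoint_closure
    (hX.of_isClosed_subset isClosed_closure (closure_mono inter_subset_right)) hdisj).ne'
    ((he hU hUc hV hVc).2 h)

lemma PreservesMazDistZero.exists_nhds_mazDist_image_pos (he : PreservesMazDistZero e)
    (hX : IsCompact (closure e.source)) (hlc : LocallyConnectedAtBoundary e.source) {x y : X}
    (hx : x ∈ closure e.source) (hy : y ∈ closure e.source) (hxy : x ≠ y) :
    ∃ U ∈ 𝓝 x, ∃ V ∈ 𝓝 y,
      0 < mazDist e.target (e '' (U ∩ e.source)) (e '' (V ∩ e.source)) := by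
  rw [closure_eq_self_union_frontier] at hx hy
  rcases hx with hx | hx
  · exact exists_nhds_mazDist_image_pos_of_mem_source hx hxy
  rcases hy with hy | hy
  · obtain ⟨V, hV, U, hU, hpos⟩ := exists_nhds_mazDist_image_pos_of_mem_source hy hxy.symm
    exact ⟨U, hU, V, hV, mazDist_comm e.target _ _ ▸ hpos⟩
  · exact exists_nhds_mazDist_image_pos_of_locallyConnectedAt he hX (hlc x hx) (hlc y hy) hxy

lemma exists_mem_mazDist_image_pos {f : X → Y} {D : Set Y} {l : Filter X}
    (hB : IsCompact (closure B))
    (h : ∀ y ∈ closure B, ∃ U ∈ l, ∃ V ∈ 𝓝 y, 0 < mazDist D (f '' (U ∩ A)) (f '' (V ∩ B))) :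
    ∃ U ∈ l, 0 < mazDist D (f '' (U ∩ A)) (f '' B) := by
  suffices ∃ U ∈ l, 0 < mazDist D (f '' (U ∩ A)) (f '' (closure B ∩ B)) by
    rwa [inter_eq_right.2 subset_closure] at this
  refine hB.induction_on
    (p := fun V => ∃ U ∈ l, 0 < mazDist D (f '' (U ∩ A)) (f '' (V ∩ B))) ?_ ?_ ?_ ?_
  · exact ⟨univ, univ_mem, by simp only [empty_inter, image_empty, mazDist_empty_right,
      ENNReal.zero_lt_top]⟩
  · exact fun V V' hV ⟨U, hU, hpos⟩ =>
      ⟨U, hU, hpos.trans_le (mazDist_mono le_rfl (by gcongr))⟩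
  · intro V V' ⟨U, hU, hpos⟩ ⟨U', hU', hpos'⟩
    refine ⟨U ∩ U', inter_mem hU hU', ?_⟩
    rw [union_inter_distrib_right, image_union, mazDist_union_right]
    exact lt_min (hpos.trans_le (mazDist_mono (by gcongr; exact inter_subset_left) le_rfl))
      (hpos'.trans_le (mazDist_mono (by gcongr; exact inter_subset_right) le_rfl))
  · intro y hy
    obtain ⟨U, hU, V, hV, hpos⟩ := h y hy
    exact ⟨V, mem_nhdsWithin_of_mem_nhds hV, U, hU, hpos⟩

lemma mazDist_image_pos_of_exists_nhds {f : X → Y} {D : Set Y} (hA : IsCompact (closure A))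
    (hB : IsCompact (closure B)) (h : ∀ x ∈ closure A, ∀ y ∈ closure B, ∃ U ∈ 𝓝 x, ∃ V ∈ 𝓝 y,
      0 < mazDist D (f '' (U ∩ A)) (f '' (V ∩ B))) : 0 < mazDist D (f '' A) (f '' B) := by
  have hnhds : ∀ x ∈ closure A, ∃ W ∈ (⊤ : Filter X), ∃ U ∈ 𝓝 x,
      0 < mazDist D (f '' (W ∩ B)) (f '' (U ∩ A)) := fun x hx => by
    obtain ⟨U, hU, hpos⟩ := exists_mem_mazDist_image_pos hB (h x hx)
    exact ⟨univ, univ_mem, U, hU, by rwa [univ_inter, mazDist_comm]⟩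
  obtain ⟨W, hW, hpos⟩ := exists_mem_mazDist_image_pos hA hnhds
  rwa [mem_top.1 hW, univ_inter, mazDist_comm] at hpos

lemma PreservesMazDistZero.mazDist_image_pos (he : PreservesMazDistZero e)
    (hX : IsCompact (closure e.source)) (hlc : LocallyConnectedAtBoundary e.source)
    (hA : A ⊆ e.source) (hB : B ⊆ e.source) (hAB : Disjoint (closure A) (closure B)) :
    0 < mazDist e.target (e '' A) (e '' B) := by
  have hcompact {C : Set X} (hC : C ⊆ e.source) : IsCompact (closure C) :=
    hX.of_isClosed_subset isClosed_closure (closure_mono hC)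
  refine mazDist_image_pos_of_exists_nhds (hcompact hA) (hcompact hB) fun x hx y hy => ?_
  obtain ⟨U, hU, V, hV, hpos⟩ := he.exists_nhds_mazDist_image_pos hX hlc
    (closure_mono hA hx) (closure_mono hB hy) (hAB.ne_of_mem hx hy)
  exact ⟨U, hU, V, hV, hpos.trans_le (mazDist_mono (by gcongr) (by gcongr))⟩

lemma PreservesMazDistZero.isChainIn_image_of_locallyConnected (he : PreservesMazDistZero e)
    (hX : IsCompact (closure e.source)) (hY : IsCompact (closure e.target))
    (hlc : LocallyConnectedAtBoundary e.source) {E : ℕ → Set X} (hE : IsChainIn e.source E) :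
    IsChainIn e.target (fun k => e '' E k) := by
  refine hE.image hY fun k => ?_
  rw [← (isImage_image (hE.ssubset _).subset).frontier.image_eq,
    ← (isImage_image (hE.ssubset _).subset).frontier.image_eq]
  refine he.mazDist_image_pos hX hlc inter_subset_left inter_subset_left ?_
  exact (hE.disjoint_closure hlc k).mono
    (closure_minimal (inter_subset_right.trans frontier_subset_closure) isClosed_closure)
    (closure_inter_frontier_subset e.open_source)

lemma PreservesMazDistZero.mazDist_eq_zero_of_mem_closure_image (he : PreservesMazDistZero e)
    (hX : IsCompact (closure e.source)) (hfc : FinitelyConnectedAtBoundary e.source) {y : Y}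
    (hy : y ∈ frontier e.target) (hlc : LocallyConnectedAt e.target y) (hS : S ⊂ e.source)
    (hSc : IsConnected S) (hB : B ⊆ e.source) (hyS : y ∈ closure (e '' S))
    (hyB : y ∈ closure (e '' B)) : mazDist e.source S B = 0 := by
  obtain ⟨x, ⟨-, hx⟩, hxy⟩ := exists_mem_frontier_mem_clusterSetOn hX hB hyB hy
  refine le_zero_iff.1 (ENNReal.le_of_forall_pos_le_add fun ε hε _ => ?_)
  obtain ⟨C, hC, hCc, hCε, hyC⟩ := (hfc x hx).exists_isConnected_mem_closure_image hB hxy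
    (r := (ε / 2 : NNReal)) (by positivity)
  have hCB : (C ∩ B).Nonempty := (closure_nonempty_iff.1 ⟨y, hyC⟩).of_image
  have hSC : mazDist e.source S C = 0 := by
    rcases hC.eq_or_ssubset with rfl | hC
    · obtain ⟨s, hs⟩ := hSc.nonempty
      exact mazDist_eq_zero_of_mem (hS.subset hs) hs (hS.subset hs)
    refine (he hS hSc hC hCc).2 (hlc.mazDist_eq_zero (image_ssubset_target hS).subset
      (image_ssubset_target hC).subset hyS (closure_mono (image_mono inter_subset_left) hyC))
  calc mazDist e.source S B ≤ mazDist e.source S C + ediam C := mazDist_le_add_ediam hC hCc hCB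
    _ ≤ 0 + 2 * (ε / 2 : NNReal) := add_le_add hSC.le (ediam_le_of_subset_ball hCε)
    _ = 0 + ε := by rw [two_mul_coe_half]

lemma PreservesMazDistZero.disjoint_closure_image (he : PreservesMazDistZero e)
    (hX : IsCompact (closure e.source)) (hfc : FinitelyConnectedAtBoundary e.source)
    (hlc : LocallyConnectedAtBoundary e.target) (hS : S ⊂ e.source) (hSc : IsConnected S)
    (hST : S ⊆ T) (hT : T ⊆ e.source)
    (hpos : 0 < mazDist e.source (e.source ∩ frontier S) (e.source ∩ frontier T)) :
    Disjoint (closure (e '' S)) (closure (e.target \ e '' T)) := by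
  rw [← image_sdiff_of_subset_source hT]
  refine disjoint_left.2 fun y hyS hyT => ?_
  by_cases hy : y ∈ e.target
  · refine notMem_closure_sdiff_of_mazDist_frontier_pos hST hpos (e.map_target hy)
      (((isImage_image hS.subset).closure.symm_apply_mem_iff hy).2 hyS)
      (((isImage_image sdiff_subset).closure.symm_apply_mem_iff hy).2 hyT)
  have hyfr : y ∈ frontier e.target := by
    rw [e.open_target.frontier_eq]
    exact ⟨closure_mono (image_ssubset_target hS).subset hyS, hy⟩
  exact (hpos.trans_le (mazDist_frontier_le hST)).ne'
    (he.mazDist_eq_zero_of_mem_closure_image hX hfc hyfr (hlc y hyfr) hS hSc sdiff_subset hyS hyT)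

lemma PreservesMazDistZero.isChainIn_image_of_finitelyConnected (he : PreservesMazDistZero e)
    (hX : IsCompact (closure e.source)) (hY : IsCompact (closure e.target))
    (hfc : FinitelyConnectedAtBoundary e.source) (hlc : LocallyConnectedAtBoundary e.target)
    {E : ℕ → Set X} (hE : IsChainIn e.source E) : IsChainIn e.target (fun k => e '' E k) := by
  refine hE.image hY fun k => ?_
  have hsub : e '' E (k + 1) ⊆ e.target := (image_ssubset_target (hE.ssubset (k + 1))).subset
  refine mazDist_frontier_pos e.open_target
    (hY.of_isClosed_subset isClosed_closure (closure_mono hsub)) ?_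
  exact he.disjoint_closure_image hX hfc hlc (hE.ssubset (k + 1)) (hE.isConnected (k + 1))
    (hE.succ_subset k) (hE.ssubset k).subset (hE.mazDist_frontier_pos k)

lemma PreservesMazDistZero.isPrimeChain_image (he : PreservesMazDistZero e)
    (hX : IsCompact (closure e.source)) (hY : IsCompact (closure e.target))
    (hfc : FinitelyConnectedAtBoundary e.source) (hlc : LocallyConnectedAtBoundary e.target)
    {E : ℕ → Set X} (hE : IsPrimeChain e.source E) :
    IsPrimeChain e.target (fun k => e '' E k) := by
  obtain ⟨hchain, hprime⟩ := hE
  refine ⟨he.isChainIn_image_of_finitelyConnected hX hY hfc hlc hchain, fun G hG hGE k => ?_⟩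
  have hGpull : IsChainIn e.source (fun k => e.symm '' G k) :=
    he.symm.isChainIn_image_of_locallyConnected hY hX hlc hG
  have hdiv : ChainDivides (fun k => e.symm '' G k) E := fun j => by
    obtain ⟨l, hl⟩ := hGE j
    exact ⟨l, (image_mono hl).trans_eq
      (e.symm_image_image_of_subset_source (hchain.ssubset j).subset)⟩
  obtain ⟨l, hl⟩ := hprime _ hGpull hdiv k
  exact ⟨l, (image_mono hl).trans_eq (e.image_symm_image_of_subset_target (hG.ssubset k).subset)⟩

end PreservesMazDistZero

section RectifiablyJoinedIn

variable {X : Type*} [MetricSpace X]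

/-- Two points are rectifiably joined in `W` if some path of finite length inside `W` connects
them. -/
def RectifiablyJoinedIn (W : Set X) (a b : X) : Prop :=
  ∃ γ : Path a b, range γ ⊆ W ∧ BoundedVariationOn γ.extend (Icc 0 1)

lemma RectifiablyJoinedIn.symm {W : Set X} {a b : X} (h : RectifiablyJoinedIn W a b) :
    RectifiablyJoinedIn W b a := by
  obtain ⟨γ, hγW, hγ⟩ := h
  refine ⟨γ.symm, by rwa [γ.symm_range], ne_top_of_le_ne_top hγ ?_⟩
  rw [γ.extend_symm]
  exact eVariationOn.comp_le_of_antitoneOn _ _ (fun s _ t _ hst => by grind)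
    fun t ht => by grind

lemma eVariationOn_extend_trans_le {a b c : X} (γ : Path a b) (δ : Path b c) :
    eVariationOn (γ.trans δ).extend (Icc 0 1) ≤
      eVariationOn γ.extend (Icc 0 1) + eVariationOn δ.extend (Icc 0 1) := by
  have hleft : eVariationOn (γ.trans δ).extend (Icc 0 (1 / 2)) ≤
      eVariationOn γ.extend (Icc 0 1) := by
    rw [eVariationOn.congr fun t ht => γ.extend_trans_of_le_half δ ht.2]
    exact eVariationOn.comp_le_of_monotoneOn _ _ (fun s _ t _ hst => by grind)
      fun t ht => by grind
  have hright : eVariationOn (γ.trans δ).extend (Icc (1 / 2) 1) ≤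
      eVariationOn δ.extend (Icc 0 1) := by
    rw [eVariationOn.congr fun t ht => γ.extend_trans_of_half_le δ ht.1]
    exact eVariationOn.comp_le_of_monotoneOn _ _ (fun s _ t _ hst => by grind)
      fun t ht => by grind
  have hsplit := eVariationOn.Icc_add_Icc (γ.trans δ).extend (s := univ)
    (show (0 : ℝ) ≤ 1 / 2 by norm_num) (show (1 / 2 : ℝ) ≤ 1 by norm_num) (mem_univ _)
  simp only [univ_inter] at hsplit
  exact hsplit ▸ add_le_add hleft hright

lemma RectifiablyJoinedIn.trans {W : Set X} {a b c : X} (h : RectifiablyJoinedIn W a b)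
    (h' : RectifiablyJoinedIn W b c) : RectifiablyJoinedIn W a c := by
  obtain ⟨γ, hγW, hγ⟩ := h
  obtain ⟨δ, hδW, hδ⟩ := h'
  refine ⟨γ.trans δ, ?_, ne_top_of_le_ne_top (ENNReal.add_ne_top.2 ⟨hγ, hδ⟩)
    (eVariationOn_extend_trans_le γ δ)⟩
  rw [γ.trans_range]
  exact union_subset hγW hδW

lemma QuasiconvexSpace.eventually_rectifiablyJoinedIn (h : QuasiconvexSpace X) {W : Set X}
    {x : X} (hW : W ∈ 𝓝 x) : ∀ᶠ y in 𝓝 x, RectifiablyJoinedIn W x y := by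
  obtain ⟨C, hC, hcurve⟩ := h
  obtain ⟨r, hr, hrW⟩ := Metric.mem_nhds_iff.1 hW
  filter_upwards [ball_mem_nhds x (show 0 < r / C by positivity)] with y hy
  obtain ⟨γ, hγc, hγ0, hγ1, hγlen⟩ := hcurve x y
  have hlen : ENNReal.ofReal (C * dist x y) < ENNReal.ofReal r := by
    rw [mem_ball', lt_div_iff₀' (by positivity)] at hy
    exact (ENNReal.ofReal_lt_ofReal_iff hr).2 hy
  have hextend : EqOn (Path.ofLine hγc hγ0 hγ1).extend γ (Icc 0 1) := fun t ht => by
    rw [Path.extend_apply _ ht]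
    rfl
  refine ⟨Path.ofLine hγc hγ0 hγ1, ?_, ?_⟩
  · refine range_subset_iff.2 fun t => hrW ?_
    have hdist := (eVariationOn.edist_le γ t.2 unitInterval.zero_mem).trans_lt
      (hγlen.trans_lt hlen)
    rw [hγ0, edist_lt_ofReal] at hdist
    exact hdist
  · rw [BoundedVariationOn, eVariationOn.congr hextend]
    exact ne_top_of_le_ne_top ENNReal.ofReal_ne_top hγlen

lemma QuasiconvexSpace.rectifiablyJoinedIn (h : QuasiconvexSpace X) {W K : Set X}
    (hW : IsOpen W) (hKW : K ⊆ W) (hK : IsPreconnected K) {a b : X} (ha : a ∈ K) (hb : b ∈ K) :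
    RectifiablyJoinedIn W a b :=
  hK.induction₂ (RectifiablyJoinedIn W)
    (fun _ hx => mem_nhdsWithin_of_mem_nhds <|
      h.eventually_rectifiablyJoinedIn <| hW.mem_nhds <| hKW hx)
    (fun _ _ _ _ _ _ => .trans) (fun _ _ _ _ => .symm) ha hb

end RectifiablyJoinedIn

section innerDiamDist

variable {X : Type*} [MetricSpace X] {Ω A B : Set X}

lemma mazDist_le_innerDiamDist (Ω A B : Set X) : mazDist Ω A B ≤ innerDiamDist Ω A B := by
  refine le_iInf₂ fun γ ⟨hγc, hγΩ, _, hγA, hγB⟩ => ?_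
  exact mazDist_le_ediam hγΩ ((isConnected_Icc zero_le_one).image γ hγc)
    ⟨γ 0, mem_image_of_mem γ unitInterval.zero_mem, hγA⟩
    ⟨γ 1, mem_image_of_mem γ unitInterval.one_mem, hγB⟩

lemma innerDiamDist_le_ediam_image {γ : ℝ → X} (hγ : ContinuousOn γ (Icc 0 1))
    (hγΩ : γ '' Icc 0 1 ⊆ Ω) (hγfin : eVariationOn γ (Icc 0 1) < ⊤) (hγA : γ 0 ∈ A)
    (hγB : γ 1 ∈ B) : innerDiamDist Ω A B ≤ ediam (γ '' Icc 0 1) :=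
  iInf₂_le_of_le γ ⟨hγ, hγΩ, hγfin, hγA, hγB⟩ le_rfl

lemma RectifiablyJoinedIn.innerDiamDist_le {W : Set X} {a b : X}
    (h : RectifiablyJoinedIn W a b) (hWΩ : W ⊆ Ω) (ha : a ∈ A) (hb : b ∈ B) :
    innerDiamDist Ω A B ≤ ediam W := by
  obtain ⟨γ, hγW, hγ⟩ := h
  have himage : γ.extend '' Icc 0 1 ⊆ W :=
    (image_subset_range _ _).trans (γ.extend_range.trans_subset hγW)
  calc innerDiamDist Ω A B ≤ ediam (γ.extend '' Icc 0 1) :=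
        innerDiamDist_le_ediam_image γ.continuous_extend.continuousOn (himage.trans hWΩ)
          hγ.lt_top (by rwa [γ.extend_zero]) (by rwa [γ.extend_one])
    _ ≤ ediam W := ediam_mono himage

lemma QuasiconvexSpace.innerDiamDist_eq_mazDist (h : QuasiconvexSpace X) (hΩ : IsOpen Ω)
    (A B : Set X) : innerDiamDist Ω A B = mazDist Ω A B := by
  refine (mazDist_le_innerDiamDist Ω A B).antisymm' (le_iInf₂ ?_)
  rintro K ⟨hKΩ, hK, ⟨a, haK, haA⟩, ⟨b, hbK, hbB⟩⟩
  refine ENNReal.le_of_forall_pos_le_add fun ε hε _ => ?_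
  have hjoin : RectifiablyJoinedIn (Ω ∩ thickening (ε / 2 : NNReal) K) a b :=
    h.rectifiablyJoinedIn (hΩ.inter isOpen_thickening)
      (subset_inter hKΩ (self_subset_thickening (by positivity) K)) hK.isPreconnected haK hbK
  calc innerDiamDist Ω A B ≤ ediam (Ω ∩ thickening (ε / 2 : NNReal) K) :=
        hjoin.innerDiamDist_le inter_subset_left haA hbB
    _ ≤ ediam (thickening (ε / 2 : NNReal) K) := ediam_mono inter_subset_right
    _ ≤ ediam K + 2 * (ε / 2 : NNReal) := ediam_thickening_le _
    _ = ediam K + ε := by rw [two_mul_coe_half]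

end innerDiamDist

section ClassF

variable {X Y : Type*} [MetricSpace X] [MetricSpace Y] {Ω : Set X} {D : Set Y} {f : X → Y}
  {g : Y → X}

/-- The partial homeomorphism with source `Ω` and target `D` given by a homeomorphism between
open sets. -/
def IsHomeoBetween.toOpenPartialHomeomorph (h : IsHomeoBetween f g Ω D) (hΩ : IsOpen Ω)
    (hD : IsOpen D) : OpenPartialHomeomorph X Y where
  toFun := f
  invFun := g
  source := Ω
  target := D
  map_source' := h.2.2.1
  map_target' := h.2.2.2.1
  left_inv' := h.2.2.2.2.1
  right_inv' := h.2.2.2.2.2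
  open_source := hΩ
  open_target := hD
  continuousOn_toFun := h.1
  continuousOn_invFun := h.2.1

lemma ClassF.preservesMazDistZero (h : ClassF Ω D f g) (hX : QuasiconvexSpace X)
    (hY : QuasiconvexSpace Y) (hΩ : IsOpen Ω) (hD : IsOpen D) :
    PreservesMazDistZero (h.1.toOpenPartialHomeomorph hΩ hD) := by
  intro E F hE hEc hF hFc
  change mazDist Ω E F = 0 ↔ mazDist D (f '' E) (f '' F) = 0
  rw [← hX.innerDiamDist_eq_mazDist hΩ, ← hY.innerDiamDist_eq_mazDist hD]
  exact h.2 E F hE.subset hE.ne hEc hF.subset hF.ne hFc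

end ClassF

theorem statement_3_general {X Y : Type*} [MetricSpace X] [MetricSpace Y]
    (e : OpenPartialHomeomorph X Y) (he : PreservesMazDistZero e)
    (hX : IsCompact (closure e.source)) (hY : IsCompact (closure e.target))
    (hlc : LocallyConnectedAtBoundary e.source) (hfc : FinitelyConnectedAtBoundary e.target)
    (F : ℕ → Set Y) (hF : IsPrimeChain e.target F) :
    IsSingletonPrimeChain e.source (fun k => e.symm '' F k) :=
  (he.symm.isPrimeChain_image hY hX hfc hlc hF).isSingletonPrimeChain e.open_source hX hlc

/-- if moreover `D` is finitely connected at the boundary and `[F_k]` is a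
prime end in `D`, then `[f⁻¹(F_k)]` is a singleton prime end in `Ω`. -/
theorem statement_3 {X Y : Type*} [MetricSpace X] [MetricSpace Y]
    (hX : AssumptionsA X) (hY : AssumptionsA Y)
    (Ω : Set X) (hΩdom : IsDomainIn Ω) (hΩbdd : Bornology.IsBounded Ω)
    (hΩne : Ω ≠ Set.univ) (hΩlc : LocallyConnectedAtBoundary Ω)
    (D : Set Y) (hDdom : IsDomainIn D) (hDbdd : Bornology.IsBounded D)
    (hDne : D ≠ Set.univ) (hDfc : FinitelyConnectedAtBoundary D)
    (f : X → Y) (g : Y → X) (hf : ClassF Ω D f g)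
    (F : ℕ → Set Y) (hF : IsPrimeChain D F) :
    IsSingletonPrimeChain Ω (fun k => g '' F k) :=
  statement_3_general _ (hf.preservesMazDistZero hX.2.2 hY.2.2 hΩdom.1 hDdom.1)
    (hX.isCompact_closure hΩbdd) (hY.isCompact_closure hDbdd) hΩlc hDfc F hF

end
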